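/- In the tadpole graph with cycle of odd length k, let v be the far endpoint of the pendant path and let v', v'' be the two cycle vertices farthest from v. Then for any cycle vertex w, the hitting time from w to v equals h_{v'v} - l(l+1), where l is the smaller of the distances from w to v' and to v'' along the cycle. -/

import Mathlib

open scoped Classical

/-- Transition probability of the simple random walk on `G`. -/
noncomputable def stepProb {V : Type*} [Fintype V] (G : SimpleGraph V) (a b : V) : ℝ :=
  if G.Adj a b then 1 / (G.degree a) else 0

/-- Probability that the simple random walk started at `u` follows the step sequence `w`. -/
noncomputable def walkProb {V : Type*} [Fintype V] (G : SimpleGraph V) :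
    (u : V) → {n : ℕ} → (Fin n → V) → ℝ
  | _, 0, _ => 1
  | u, n + 1, w => stepProb G u (w 0) * walkProb G (w 0) (fun i : Fin n => w i.succ)

/-- Probability that the walk started at `u` first reaches `v` at time exactly `n` (for `n ≥ 1`). -/
noncomputable def firstHitProb {V : Type*} [Fintype V] (G : SimpleGraph V) (u v : V) (n : ℕ) : ℝ :=
  ∑ w ∈ Finset.univ.filter (fun w : Fin n → V =>
      (∀ i : Fin n, (i : ℕ) + 1 < n → w i ≠ v) ∧ ∀ i : Fin n, (i : ℕ) + 1 = n → w i = v),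
    walkProb G u w

/-- Expected hitting time of `v` for the simple random walk on `G` started at `u`. -/
noncomputable def hittingTime {V : Type*} [Fintype V] (G : SimpleGraph V) (u v : V) : ℝ :=
  if u = v then 0 else ∑' n : ℕ, (n : ℝ) * firstHitProb G u v n

/-- Expected first return time to `v` of the simple random walk on `G` started at `v`. -/
noncomputable def expectedReturnTime {V : Type*} [Fintype V] (G : SimpleGraph V) (v : V) : ℝ :=
  ∑' n : ℕ, (n : ℝ) * firstHitProb G v v n
/-- The tadpole graph: a cycle on `k` vertices (`Sum.inl`) together with a pendant path
on `l` additional vertices (`Sum.inr`), attached to cycle vertex `0`; path vertex `j` is at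
distance `j + 1` from the cycle, so `Sum.inr ⟨l-1,_⟩` is the far endpoint of the path. -/
def tadpole (k l : ℕ) : SimpleGraph (Fin k ⊕ Fin l) :=
  SimpleGraph.fromRel (fun x y =>
    match x, y with
    | Sum.inl i, Sum.inl j => ((i : ℕ) + 1) % k = (j : ℕ)
    | Sum.inl i, Sum.inr j => (i : ℕ) = 0 ∧ (j : ℕ) = 0
    | Sum.inr i, Sum.inr j => (i : ℕ) + 1 = (j : ℕ)
    | Sum.inr _, Sum.inl _ => False)

/-!
For a fixed target `v`, first-step analysis shows that the hitting time solves the Poisson equation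
`∑ x ∈ N(u), (g u - g x) = deg u` for `u ≠ v`, with `g v = 0`. Conversely, the minimum principle
makes every solution nonnegative, which forces the walk to be absorbed at a geometric rate; the
series defining the hitting time then telescopes to `g`.

For the tadpole the solution is explicit. A walk standing on the path at distance `d` from the cycle
has `k + d` edges behind it, so it needs `2 (k + d) + 1` steps on average to get one vertex further;
summing over `d < l` gives `l (l + 2 k)` from the attaching vertex. Cycle vertex `i` adds the
gambler's ruin time `i (k - i)` to reach that vertex around the cycle, and replacing `i` by
`(k - 1) / 2 - j` or `(k + 1) / 2 + j` lowers its maximum by `j (j + 1)`.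
-/

section WalkOnGraph

variable {V : Type*} [Fintype V] (G : SimpleGraph V)

lemma stepProb_nonneg (a b : V) : 0 ≤ stepProb G a b := by
  unfold stepProb
  split_ifs <;> positivity

lemma sum_stepProb_mul (u : V) (f : V → ℝ) :
    ∑ x, stepProb G u x * f x = (∑ x ∈ G.neighborFinset u, f x) / G.degree u := by
  simp only [stepProb, ite_mul, zero_mul, one_div_mul_eq_div, ← Finset.sum_filter,
    ← Finset.sum_div, SimpleGraph.neighborFinset_eq_filter]

lemma sum_stepProb_le_one (u : V) : ∑ x, stepProb G u x ≤ 1 := by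
  simpa using (sum_stepProb_mul G u 1).trans_le (by simpa using div_self_le_one _)

lemma sum_stepProb_eq_one {u : V} (hu : 0 < G.degree u) : ∑ x, stepProb G u x = 1 := by
  simpa [hu.ne'] using sum_stepProb_mul G u 1

lemma walkProb_nonneg (u : V) {n : ℕ} (w : Fin n → V) : 0 ≤ walkProb G u w := by
  induction n generalizing u with
  | zero => exact zero_le_one
  | succ n ih => exact mul_nonneg (stepProb_nonneg G u _) (ih _ _)

lemma firstHitProb_nonneg (u v : V) (n : ℕ) : 0 ≤ firstHitProb G u v n :=
  Finset.sum_nonneg fun w _ => walkProb_nonneg G u w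

lemma firstHitProb_one (u v : V) : firstHitProb G u v 1 = stepProb G u v := by
  have only_path : (Finset.univ.filter fun w : Fin 1 → V =>
      (∀ i : Fin 1, (i : ℕ) + 1 < 1 → w i ≠ v) ∧ ∀ i : Fin 1, (i : ℕ) + 1 = 1 → w i = v) =
      {fun _ => v} := by
    ext w
    simp [funext_iff]
  rw [firstHitProb, only_path, Finset.sum_singleton, walkProb, walkProb, mul_one]

lemma firstHitProb_add_two (u v : V) (n : ℕ) :
    firstHitProb G u v (n + 2) =
      ∑ x ∈ Finset.univ.erase v, stepProb G u x * firstHitProb G x v (n + 1) := by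
  have cons_iff (x : V) (w : Fin (n + 1) → V) :
      ((∀ i : Fin (n + 2), (i : ℕ) + 1 < n + 2 → (Fin.cons x w : Fin (n + 2) → V) i ≠ v) ∧
        ∀ i : Fin (n + 2), (i : ℕ) + 1 = n + 2 → (Fin.cons x w : Fin (n + 2) → V) i = v) ↔
      x ≠ v ∧ (∀ i : Fin (n + 1), (i : ℕ) + 1 < n + 1 → w i ≠ v) ∧
        ∀ i : Fin (n + 1), (i : ℕ) + 1 = n + 1 → w i = v := by
    simp [Fin.forall_fin_succ (n := n + 1), and_assoc]
  simp only [firstHitProb, Finset.sum_filter, Finset.mul_sum, ← Finset.filter_ne',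
    ← (Fin.consEquiv fun _ : Fin (n + 2) => V).sum_comp, Fintype.sum_prod_type]
  refine Finset.sum_congr rfl fun x _ => ?_
  by_cases hx : x = v <;>
    simp only [Fin.consEquiv_apply, cons_iff, hx, walkProb, Fin.cons_zero, Fin.cons_succ, ne_eq,
      not_true_eq_false, not_false_eq_true, false_and, true_and, if_true, if_false, mul_ite,
      mul_zero, Finset.sum_const_zero]

/-- The one-step operator of the walk on `G` killed on arrival at `v`, acting on functions. Only
steps into `v` are killed: a walk started at `v` may leave it. -/
noncomputable def killedStep (v : V) : Module.End ℝ (V → ℝ) where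
  toFun f u := ∑ x ∈ Finset.univ.erase v, stepProb G u x * f x
  map_add' f g := by
    ext u
    simp [mul_add, Finset.sum_add_distrib]
  map_smul' c f := by
    ext u
    simp only [Pi.smul_apply, smul_eq_mul, RingHom.id_apply, Finset.mul_sum, mul_left_comm]

lemma killedStep_apply (v : V) (f : V → ℝ) (u : V) :
    killedStep G v f u = ∑ x ∈ Finset.univ.erase v, stepProb G u x * f x :=
  rfl

lemma killedStep_congr {v : V} {f g : V → ℝ} (hfg : ∀ x ≠ v, f x = g x) :
    killedStep G v f = killedStep G v g := by
  ext u
  refine Finset.sum_congr rfl fun x hx => ?_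
  rw [hfg x (Finset.ne_of_mem_erase hx)]

lemma killedStep_apply_of_apply_eq_zero {v : V} {f : V → ℝ} (hf : f v = 0) (u : V) :
    killedStep G v f u = ∑ x, stepProb G u x * f x :=
  Finset.sum_erase _ (by simp [hf])

lemma killedStep_mono (v : V) : Monotone (killedStep G v) := fun _ _ hfg u =>
  Finset.sum_le_sum fun x _ => mul_le_mul_of_nonneg_left (hfg x) (stepProb_nonneg G u x)

lemma killedStep_pow_mono (v : V) (n : ℕ) : Monotone ⇑(killedStep G v ^ n) := by
  rw [Module.End.coe_pow]
  exact (killedStep_mono G v).iterate n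

lemma killedStep_pow_nonneg (v : V) {f : V → ℝ} (hf : 0 ≤ f) (n : ℕ) :
    0 ≤ (killedStep G v ^ n) f := by
  simpa using killedStep_pow_mono G v n hf

lemma killedStep_one_le (v : V) : killedStep G v 1 ≤ 1 := fun u =>
  calc killedStep G v 1 u
      _ = ∑ x ∈ Finset.univ.erase v, stepProb G u x := by simp [killedStep_apply]
      _ ≤ ∑ x, stepProb G u x :=
        Finset.sum_le_sum_of_subset_of_nonneg (Finset.erase_subset _ _)
          fun x _ _ => stepProb_nonneg G u x
      _ ≤ 1 := sum_stepProb_le_one G u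

lemma killedStep_one (hG : ∀ u, 0 < G.degree u) (v : V) :
    killedStep G v 1 = 1 - fun u => stepProb G u v := by
  ext u
  simp [killedStep_apply, Finset.sum_erase_eq_sub, sum_stepProb_eq_one G (hG u)]

lemma firstHitProb_succ_eq_killedStep_pow (v : V) (n : ℕ) :
    (fun u => firstHitProb G u v (n + 1)) = (killedStep G v ^ n) fun u => stepProb G u v := by
  induction n with
  | zero => simp [firstHitProb_one]
  | succ n ih =>
    rw [pow_succ', Module.End.mul_apply, ← ih]
    ext u
    exact firstHitProb_add_two G u v n

lemma firstHitProb_succ_eq_sub (hG : ∀ u, 0 < G.degree u) (u v : V) (n : ℕ) :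
    firstHitProb G u v (n + 1) = (killedStep G v ^ n) 1 u - (killedStep G v ^ (n + 1)) 1 u := by
  have hstep : (fun u => stepProb G u v) = 1 - killedStep G v 1 := by
    simp [killedStep_one G hG]
  rw [congrFun (firstHitProb_succ_eq_killedStep_pow G v n) u, hstep, map_sub, pow_succ,
    Module.End.mul_apply, Pi.sub_apply]

section FirstStepEquation

variable {G} {v : V} {h : V → ℝ}

/-- Compare `h` with its minimum: a negative minimum `m` would satisfy `m ≥ 1 + m`. -/
lemma nonneg_of_eq_one_add_killedStep (hh : h = 1 + killedStep G v h) : 0 ≤ h := by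
  intro u
  have : Nonempty V := ⟨u⟩
  obtain ⟨a, ha⟩ := Finite.exists_min h
  suffices 0 ≤ h a from this.trans (ha u)
  by_contra! hneg
  have hmin : h a * killedStep G v 1 a ≤ killedStep G v h a := by
    simpa using killedStep_mono G v (show h a • (1 : V → ℝ) ≤ h from fun x => by simpa using ha x) a
  have hsub : h a * 1 ≤ h a * killedStep G v 1 a :=
    mul_le_mul_of_nonpos_left (killedStep_one_le G v a) hneg.le
  have heq : h a = 1 + killedStep G v h a := congrFun hh a
  linarith

lemma one_le_of_eq_one_add_killedStep (hh : h = 1 + killedStep G v h) : 1 ≤ h := by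
  rw [hh, le_add_iff_nonneg_right, ← map_zero (killedStep G v)]
  exact killedStep_mono G v (nonneg_of_eq_one_add_killedStep hh)

lemma exists_killedStep_le_smul (hh : h = 1 + killedStep G v h) :
    ∃ r : ℝ, 0 ≤ r ∧ r < 1 ∧ killedStep G v h ≤ r • h := by
  have : Nonempty V := ⟨v⟩
  obtain ⟨b, hb⟩ := Finite.exists_max h
  have hb1 : 1 ≤ h b := one_le_of_eq_one_add_killedStep hh b
  have hb0 : 0 < h b := one_pos.trans_le hb1
  refine ⟨1 - 1 / h b, sub_nonneg.2 ((div_le_one hb0).2 hb1), sub_lt_self 1 (by positivity),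
    fun u => ?_⟩
  have hu : h u = 1 + killedStep G v h u := congrFun hh u
  have hub : h u / h b ≤ 1 := (div_le_one hb0).2 (hb u)
  calc killedStep G v h u
      _ ≤ h u - h u / h b := by linarith
      _ = ((1 - 1 / h b) • h) u := by rw [Pi.smul_apply, smul_eq_mul]; ring

lemma exists_killedStep_pow_le_smul (hh : h = 1 + killedStep G v h) :
    ∃ r : ℝ, 0 ≤ r ∧ r < 1 ∧ ∀ n, (killedStep G v ^ n) h ≤ r ^ n • h := by
  obtain ⟨r, hr0, hr1, hr⟩ := exists_killedStep_le_smul hh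
  refine ⟨r, hr0, hr1, fun n => ?_⟩
  induction n with
  | zero => simp
  | succ n ih =>
    calc (killedStep G v ^ (n + 1)) h
        _ = (killedStep G v ^ n) (killedStep G v h) := by rw [pow_succ, Module.End.mul_apply]
        _ ≤ (killedStep G v ^ n) (r • h) := killedStep_pow_mono G v n hr
        _ = r • (killedStep G v ^ n) h := map_smul _ _ _
        _ ≤ r • r ^ n • h := smul_le_smul_of_nonneg_left ih hr0
        _ = r ^ (n + 1) • h := by rw [smul_smul, pow_succ']

lemma killedStep_pow_one_eq_sub (hh : h = 1 + killedStep G v h) (n : ℕ) :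
    (killedStep G v ^ n) 1 = (killedStep G v ^ n) h - (killedStep G v ^ (n + 1)) h := by
  rw [pow_succ, Module.End.mul_apply, ← map_sub, ← eq_sub_of_add_eq hh.symm]

/-- The partial sums of `∑ m * firstHitProb G u v m` telescope to `h u` minus this quantity. -/
lemma tendsto_killedStep_pow_add_mul (hh : h = 1 + killedStep G v h) (u : V) :
    Filter.Tendsto (fun n : ℕ => (killedStep G v ^ n) h u + n * (killedStep G v ^ n) 1 u)
      Filter.atTop (nhds 0) := by
  obtain ⟨r, hr0, hr1, hr⟩ := exists_killedStep_pow_le_smul hh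
  have h_nonneg := nonneg_of_eq_one_add_killedStep hh
  have one_le_h := one_le_of_eq_one_add_killedStep hh
  have tail_nonneg (n : ℕ) : 0 ≤ (killedStep G v ^ n) h u := killedStep_pow_nonneg G v h_nonneg n u
  have survival_nonneg (n : ℕ) : 0 ≤ (killedStep G v ^ n) 1 u :=
    killedStep_pow_nonneg G v zero_le_one n u
  have survival_le (n : ℕ) : (killedStep G v ^ n) 1 u ≤ r ^ n * h u :=
    (killedStep_pow_mono G v n one_le_h u).trans (hr n u)
  refine squeeze_zero (g := fun n : ℕ => (r ^ n + n * r ^ n) * h u)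
    (fun n => add_nonneg (tail_nonneg n) (mul_nonneg n.cast_nonneg (survival_nonneg n)))
    (fun n => ?_) ?_
  · rw [add_mul, mul_assoc]
    gcongr
    exacts [hr n u, survival_le n]
  · simpa using ((tendsto_pow_atTop_nhds_zero_of_lt_one hr0 hr1).add
      (tendsto_self_mul_const_pow_of_lt_one hr0 hr1)).mul_const (h u)

theorem hasSum_mul_firstHitProb (hh : h = 1 + killedStep G v h)
    (hG : ∀ u, 0 < G.degree u) (u : V) :
    HasSum (fun n : ℕ => (n : ℝ) * firstHitProb G u v n) (h u) := by
  set c : ℕ → ℝ := fun n => (killedStep G v ^ n) h u + n * (killedStep G v ^ n) 1 u with hc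
  have term_eq (n : ℕ) : ((n + 1 : ℕ) : ℝ) * firstHitProb G u v (n + 1) = c n - c (n + 1) := by
    have hn : (killedStep G v ^ n) 1 u =
        (killedStep G v ^ n) h u - (killedStep G v ^ (n + 1)) h u :=
      congrFun (killedStep_pow_one_eq_sub hh n) u
    rw [firstHitProb_succ_eq_sub G hG]
    push_cast [hc]
    linear_combination hn
  have c_zero : c 0 = h u := by simp [hc]
  rw [← hasSum_nat_add_iff' 1, hasSum_iff_tendsto_nat_of_nonneg
    fun n => mul_nonneg (n + 1).cast_nonneg (firstHitProb_nonneg G u v (n + 1))]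
  simpa only [term_eq, Finset.sum_range_sub', c_zero, Finset.sum_range_one, Nat.cast_zero, zero_mul,
    sub_zero] using (tendsto_killedStep_pow_add_mul hh u).const_sub (h u)

end FirstStepEquation

variable {G} in
theorem hittingTime_eq_of_sum_sub_eq_degree (hG : ∀ u, 0 < G.degree u) {v : V} {g : V → ℝ}
    (hgv : g v = 0) (hg : ∀ u ≠ v, ∑ x ∈ G.neighborFinset u, (g u - g x) = G.degree u) (u : V) :
    hittingTime G u v = g u := by
  have first_step (u : V) (hu : u ≠ v) : (1 + killedStep G v g) u = g u := by
    have hdeg : (G.degree u : ℝ) ≠ 0 := by exact_mod_cast (hG u).ne'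
    have hsum := hg u hu
    rw [Finset.sum_sub_distrib, Finset.sum_const, SimpleGraph.card_neighborFinset_eq_degree,
      nsmul_eq_mul] at hsum
    rw [Pi.add_apply, Pi.one_apply, killedStep_apply_of_apply_eq_zero G hgv, sum_stepProb_mul]
    field_simp
    linarith
  -- At `v` itself `1 + killedStep G v g` is the expected return time, not `g v = 0`.
  have hsol : 1 + killedStep G v g = 1 + killedStep G v (1 + killedStep G v g) := by
    rw [killedStep_congr G first_step]
  rcases eq_or_ne u v with rfl | hu
  · simp [hittingTime, hgv]
  · rw [hittingTime, if_neg hu, (hasSum_mul_firstHitProb hsol hG u).tsum_eq, first_step u hu]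

end WalkOnGraph

section Tadpole

variable {k l : ℕ}

lemma tadpole_adj_inl_inl {i j : Fin k} :
    (tadpole k l).Adj (Sum.inl i) (Sum.inl j) ↔
      i ≠ j ∧ (((i : ℕ) + 1) % k = j ∨ ((j : ℕ) + 1) % k = i) := by
  simp [tadpole]

lemma tadpole_adj_inl_inr {i : Fin k} {j : Fin l} :
    (tadpole k l).Adj (Sum.inl i) (Sum.inr j) ↔ (i : ℕ) = 0 ∧ (j : ℕ) = 0 := by
  simp [tadpole]

lemma tadpole_adj_inr_inl {i : Fin k} {j : Fin l} :
    (tadpole k l).Adj (Sum.inr j) (Sum.inl i) ↔ (i : ℕ) = 0 ∧ (j : ℕ) = 0 := by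
  rw [SimpleGraph.adj_comm, tadpole_adj_inl_inr]

lemma tadpole_adj_inr_inr {i j : Fin l} :
    (tadpole k l).Adj (Sum.inr i) (Sum.inr j) ↔ (i : ℕ) + 1 = j ∨ (j : ℕ) + 1 = i := by
  simp only [tadpole, SimpleGraph.fromRel_adj, ne_eq, Sum.inr.injEq, Fin.ext_iff]
  omega

lemma add_one_mod_eq_ite {n : ℕ} (hn : n < k) : (n + 1) % k = if n + 1 = k then 0 else n + 1 := by
  split_ifs with h
  · rw [h, Nat.mod_self]
  · exact Nat.mod_eq_of_lt (by omega)

lemma tadpole_degree_pos (hk : 2 ≤ k) (u : Fin k ⊕ Fin l) : 0 < (tadpole k l).degree u := by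
  rw [SimpleGraph.degree_pos_iff_exists_adj]
  rcases u with i | ⟨_ | j, hj⟩
  · refine ⟨Sum.inl ⟨(i + 1) % k, Nat.mod_lt _ (by omega)⟩, tadpole_adj_inl_inl.2 ⟨?_, Or.inl rfl⟩⟩
    simp only [ne_eq, Fin.ext_iff, add_one_mod_eq_ite i.isLt]
    grind
  · exact ⟨Sum.inl ⟨0, by omega⟩, tadpole_adj_inr_inl.2 ⟨rfl, rfl⟩⟩
  · exact ⟨Sum.inr ⟨j, by omega⟩, tadpole_adj_inr_inr.2 (Or.inr rfl)⟩

lemma neighborFinset_tadpole_inl_zero (hk : 2 ≤ k) (hl : 0 < l) :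
    (tadpole k l).neighborFinset (Sum.inl ⟨0, by omega⟩) =
      {Sum.inl ⟨1, by omega⟩, Sum.inl ⟨k - 1, by omega⟩, Sum.inr ⟨0, hl⟩} := by
  ext (a | b)
  · simp only [SimpleGraph.mem_neighborFinset, tadpole_adj_inl_inl, add_one_mod_eq_ite a.isLt,
      Nat.mod_eq_of_lt hk, Finset.mem_insert, Finset.mem_singleton, Sum.inl.injEq, Fin.ext_iff,
      reduceCtorEq]
    grind
  · simp [tadpole_adj_inl_inr, Fin.ext_iff]

lemma neighborFinset_tadpole_inl_succ {i : ℕ} (hi : i + 1 < k) :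
    (tadpole k l).neighborFinset (Sum.inl ⟨i + 1, hi⟩) =
      {Sum.inl ⟨i, by omega⟩, Sum.inl ⟨(i + 2) % k, Nat.mod_lt _ (by omega)⟩} := by
  ext (a | b)
  · simp only [SimpleGraph.mem_neighborFinset, tadpole_adj_inl_inl, add_one_mod_eq_ite a.isLt,
      add_one_mod_eq_ite hi, Finset.mem_insert, Finset.mem_singleton, Sum.inl.injEq, Fin.ext_iff]
    grind
  · simp [tadpole_adj_inl_inr]

lemma neighborFinset_tadpole_inr_zero (hk : 0 < k) (hl : 1 < l) :
    (tadpole k l).neighborFinset (Sum.inr ⟨0, by omega⟩) =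
      {Sum.inl ⟨0, hk⟩, Sum.inr ⟨1, hl⟩} := by
  ext (a | b)
  · simp [tadpole_adj_inr_inl, Fin.ext_iff]
  · simp [tadpole_adj_inr_inr, Fin.ext_iff, eq_comm]

lemma neighborFinset_tadpole_inr_succ {j : ℕ} (hj : j + 2 < l) :
    (tadpole k l).neighborFinset (Sum.inr ⟨j + 1, by omega⟩) =
      {Sum.inr ⟨j, by omega⟩, Sum.inr ⟨j + 2, hj⟩} := by
  ext (a | b)
  · simp [tadpole_adj_inr_inl]
  · simp only [SimpleGraph.mem_neighborFinset, tadpole_adj_inr_inr, Finset.mem_insert,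
      Finset.mem_singleton, Sum.inr.injEq, Fin.ext_iff]
    omega

/-- The expected time for the walk on `tadpole k l` to reach the far endpoint of the path, as an
explicit function of the starting vertex. -/
def tadpoleTime (k l : ℕ) : Fin k ⊕ Fin l → ℝ
  | Sum.inl i => l * (l + 2 * k) + i * (k - i)
  | Sum.inr j => l * (l + 2 * k) - (j + 1) * (j + 1 + 2 * k)

lemma tadpoleTime_inl_mod {i : ℕ} (hi : i ≤ k) (hik : i % k < k) :
    tadpoleTime k l (Sum.inl ⟨i % k, hik⟩) = l * (l + 2 * k) + i * (k - i) := by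
  rcases hi.lt_or_eq with hlt | rfl
  · simp [tadpoleTime, Nat.mod_eq_of_lt hlt]
  · simp [tadpoleTime]

lemma sum_tadpoleTime_inl_sub_eq_degree (hk : 3 ≤ k) (hl : 0 < l) (i : Fin k) :
    ∑ x ∈ (tadpole k l).neighborFinset (Sum.inl i),
      (tadpoleTime k l (Sum.inl i) - tadpoleTime k l x) = (tadpole k l).degree (Sum.inl i) := by
  rw [← SimpleGraph.card_neighborFinset_eq_degree]
  rcases i with ⟨_ | i, hi⟩
  · have hne : 1 ≠ k - 1 := by omega
    rw [neighborFinset_tadpole_inl_zero (by omega) hl, Finset.sum_insert (by simp [hne]),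
      Finset.sum_pair (by simp), Finset.card_insert_of_notMem (by simp [hne]),
      Finset.card_pair (by simp)]
    simp only [tadpoleTime]
    push_cast [Nat.cast_sub (show 1 ≤ k by omega)]
    ring
  · have hne : i ≠ (i + 2) % k := by
      rw [add_one_mod_eq_ite hi]
      grind
    rw [neighborFinset_tadpole_inl_succ hi, Finset.sum_pair (by simp [hne]),
      Finset.card_pair (by simp [hne]), tadpoleTime_inl_mod (by omega)]
    simp only [tadpoleTime]
    push_cast
    ring

lemma sum_tadpoleTime_inr_sub_eq_degree (hk : 0 < k) {j : Fin l} (hj : (j : ℕ) + 1 < l) :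
    ∑ x ∈ (tadpole k l).neighborFinset (Sum.inr j),
      (tadpoleTime k l (Sum.inr j) - tadpoleTime k l x) = (tadpole k l).degree (Sum.inr j) := by
  rw [← SimpleGraph.card_neighborFinset_eq_degree]
  rcases j with ⟨_ | j, _⟩
  · rw [neighborFinset_tadpole_inr_zero hk hj, Finset.sum_pair (by simp),
      Finset.card_pair (by simp)]
    simp only [tadpoleTime]
    push_cast
    ring
  · rw [neighborFinset_tadpole_inr_succ hj, Finset.sum_pair (by simp), Finset.card_pair (by simp)]
    simp only [tadpoleTime]
    push_cast
    ring

theorem hittingTime_tadpole (hk : 3 ≤ k) (u : Fin k ⊕ Fin (l + 1)) :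
    hittingTime (tadpole k (l + 1)) u (Sum.inr (Fin.last l)) = tadpoleTime k (l + 1) u := by
  refine hittingTime_eq_of_sum_sub_eq_degree (tadpole_degree_pos (by omega))
    (by simp [tadpoleTime]) ?_ u
  rintro (i | j) hu
  · exact sum_tadpoleTime_inl_sub_eq_degree hk l.succ_pos i
  · have hj : j < Fin.last l := Fin.lt_last_iff_ne_last.2 fun h => hu (congrArg Sum.inr h)
    exact sum_tadpoleTime_inr_sub_eq_degree (by omega) (Nat.succ_lt_succ hj)

end Tadpole

theorem stmt_10 (k l : ℕ) (hk : 3 ≤ k) (hko : Odd k) (hl : 1 ≤ l)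
    (v : Fin k ⊕ Fin l) (hv : v = Sum.inr ⟨l - 1, by omega⟩)
    (v' : Fin k ⊕ Fin l) (hv' : v' = Sum.inl ⟨(k - 1) / 2, by omega⟩)
    (v'' : Fin k ⊕ Fin l) (hv'' : v'' = Sum.inl ⟨(k + 1) / 2, by omega⟩)
    (j : ℕ) (hj : j ≤ (k - 1) / 2) :
    hittingTime (tadpole k l) (Sum.inl ⟨(k - 1) / 2 - j, by omega⟩) v =
      hittingTime (tadpole k l) v' v - (j : ℝ) * (j + 1) ∧
    hittingTime (tadpole k l) (Sum.inl ⟨((k + 1) / 2 + j) % k, Nat.mod_lt _ (by omega)⟩) v =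
      hittingTime (tadpole k l) v' v - (j : ℝ) * (j + 1) := by
  subst hv hv'
  obtain ⟨l, rfl⟩ := Nat.exists_eq_add_of_le' hl
  obtain ⟨m, rfl⟩ := hko
  have hitting_time (u : Fin (2 * m + 1) ⊕ Fin (l + 1)) :
      hittingTime (tadpole (2 * m + 1) (l + 1)) u (Sum.inr ⟨l + 1 - 1, by omega⟩) =
        tadpoleTime (2 * m + 1) (l + 1) u :=
    hittingTime_tadpole hk u
  have half_pred : (2 * m + 1 - 1) / 2 = m := by omega
  have half_succ : (2 * m + 1 + 1) / 2 = m + 1 := by omega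
  rw [half_pred] at hj
  rw [hitting_time, hitting_time, hitting_time, tadpoleTime_inl_mod (by omega)]
  simp only [tadpoleTime, half_pred, half_succ]
  push_cast [Nat.cast_sub hj]
  constructor <;> ring
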